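/- Let ω > 0, β > 0, g ∈ ℝ, and set n_c = 1/(βω). For all t, τ ∈ ℝ, ∫∫_{ℝ²} (βω/(2π)) · exp(−(βω/2)(x₀² + p₀²)) · exp(−2√2·i·(g/ω)·[x₀·(sin(ω(t+τ)) − sin(ωt)) + p₀·(cos(ωt) − cos(ω(t+τ)))]) dx₀ dp₀ = exp(−16·n_c·(g²/ω²)·sin²(ωτ/2)). In particular the averaged phase factor ⟨e^{i(φ(t+τ)−φ(t))}⟩ does not depend on t, so the random unitary channel of semi-classical model 1 is time-translation invariant: L_{0→τ} = L_{t→t+τ} for all t. -/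

import Mathlib

/-!
The average is the characteristic function of a rotation-invariant Gaussian on phase space, so it
depends only on the Euclidean length of the frequency vector. Up to a constant, that vector is the
chord between the points of the unit circle at angles `ω t` and `ω (t + τ)`, whose length depends
only on the difference `ω τ`.
-/

open Real MeasureTheory

lemma integral_integral_gaussian_mul_cexp {b : ℂ} (hb : 0 < b.re) (u v : ℂ) :
    (∫ x : ℝ, ∫ p : ℝ, b / π * Complex.exp (-b * (x ^ 2 + p ^ 2)) *
      Complex.exp (Complex.I * (u * x + v * p)))
      = Complex.exp (-(u ^ 2 + v ^ 2) / (4 * b)) := by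
  have hb₀ : b ≠ 0 := by
    rintro rfl
    simp at hb
  have hπ : (π : ℂ) ≠ 0 := Complex.ofReal_ne_zero.mpr pi_ne_zero
  have separate (x p : ℝ) : b / π * Complex.exp (-b * (x ^ 2 + p ^ 2)) *
      Complex.exp (Complex.I * (u * x + v * p)) =
      b / π * (Complex.exp (Complex.I * u * x) * Complex.exp (-b * x ^ 2)) *
        (Complex.exp (Complex.I * v * p) * Complex.exp (-b * p ^ 2)) := by
    simp only [mul_assoc, ← Complex.exp_add]
    ring_nf
  have sq_root : (π / b : ℂ) ^ (1 / 2 : ℂ) * (π / b : ℂ) ^ (1 / 2 : ℂ) = π / b := by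
    rw [← Complex.cpow_add _ _ (div_ne_zero hπ hb₀), add_halves, Complex.cpow_one]
  simp_rw [separate, integral_const_mul, integral_mul_const, integral_const_mul,
    fourierIntegral_gaussian hb]
  calc
    _ = b / π * ((π / b : ℂ) ^ (1 / 2 : ℂ) * (π / b : ℂ) ^ (1 / 2 : ℂ)) *
        (Complex.exp (-u ^ 2 / (4 * b)) * Complex.exp (-v ^ 2 / (4 * b))) := by ring
    _ = Complex.exp (-u ^ 2 / (4 * b)) * Complex.exp (-v ^ 2 / (4 * b)) := by
      rw [sq_root, div_mul_div_cancel₀ hπ, div_self hb₀, one_mul]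
    _ = Complex.exp (-(u ^ 2 + v ^ 2) / (4 * b)) := by
      rw [← Complex.exp_add, neg_add, add_div]

lemma sin_sub_sin_sq_add_cos_sub_cos_sq (x y : ℝ) :
    (sin x - sin y) ^ 2 + (cos x - cos y) ^ 2 = 4 * sin ((x - y) / 2) ^ 2 := by
  rw [sin_sub_sin, cos_sub_cos]
  linear_combination 4 * sin ((x - y) / 2) ^ 2 * sin_sq_add_cos_sq ((x + y) / 2)

/-- Time-translation invariance of the random unitary channel of semi-classical
model 1: the thermally averaged phase factor `⟨e^{i(φ(t+τ)−φ(t))}⟩` equals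
`exp(−16 n_c (g²/ω²) sin²(ωτ/2))` for all `t`, hence depends only on `τ`,
so that `L_{0→τ} = L_{t→t+τ}`. -/
theorem time_translation_invariance_model1
    (ω β g : ℝ) (hω : 0 < ω) (hβ : 0 < β) (t τ : ℝ) :
    (∫ x₀ : ℝ, ∫ p₀ : ℝ,
        ((β * ω / (2 * π) * Real.exp (-(β * ω / 2) * (x₀ ^ 2 + p₀ ^ 2)) : ℝ) : ℂ) *
          Complex.exp (Complex.I *
            ((-(2 * Real.sqrt 2) * (g / ω) *
              (x₀ * (Real.sin (ω * (t + τ)) - Real.sin (ω * t)) +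
                p₀ * (Real.cos (ω * t) - Real.cos (ω * (t + τ)))) : ℝ) : ℂ)))
      = ((Real.exp (-16 * (1 / (β * ω)) * (g ^ 2 / ω ^ 2) * Real.sin (ω * τ / 2) ^ 2) : ℝ) : ℂ) := by
  set κ : ℝ := -(2 * √2) * (g / ω) with hκ
  set u : ℝ := sin (ω * (t + τ)) - sin (ω * t) with hu
  set v : ℝ := cos (ω * t) - cos (ω * (t + τ)) with hv
  have hb : 0 < ((β * ω / 2 : ℝ) : ℂ).re := by
    rw [Complex.ofReal_re]
    positivity
  have coupling_sq : κ ^ 2 = 8 * (g ^ 2 / ω ^ 2) := by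
    rw [hκ, mul_pow, neg_sq, mul_pow, sq_sqrt zero_le_two, div_pow]
    norm_num
  have chord_sq : u ^ 2 + v ^ 2 = 4 * sin (ω * τ / 2) ^ 2 := by
    rw [hu, hv, sub_sq_comm (cos _), sin_sub_sin_sq_add_cos_sub_cos_sq, ← mul_sub,
      add_sub_cancel_left]
  have exponent : -((κ * u) ^ 2 + (κ * v) ^ 2) / (4 * (β * ω / 2)) =
      -16 * (1 / (β * ω)) * (g ^ 2 / ω ^ 2) * sin (ω * τ / 2) ^ 2 := by
    rw [mul_pow κ, mul_pow κ, ← mul_add, coupling_sq, chord_sq]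
    ring
  rw [← exponent]
  convert integral_integral_gaussian_mul_cexp hb (κ * u) (κ * v) using 5 with x p
  all_goals
    push_cast
    ring_nf
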